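/- Let (η, ϕ) be a smooth solution of the two-dimensional water-wave system on [0,T], with (conserved) energy 𝓗 := 𝓗(0). Assume there exist positive constants A, B such that B < 2/7, T ≥ (4/(2 − 7B))·(1 + 5L₁A/√g), sup_{t∈[0,T]} ‖∂ₓη(t,·)‖_{L^∞([0,L₁])} ≤ B and sup_{t∈[0,T]} ‖∂ₓψ(t,·)‖_{L²([0,L₁])} ≤ A·√(2𝓗). Then L₁∫₀ᵀ Θ(t,L₁) dt ≥ 𝓗 + (L₁/2)∫₀ᵀ∫₋ₕ^{m(t)} (∂_yϕ(t,L₁,y))² dy dt + (h/16)∫₀ᵀ∫₀^{L₁} (∂ₓϕ(t,x,−h))² dx dt. -/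

import Mathlib

open Real Set MeasureTheory

noncomputable section

/-- `∂ₓϕ(t,x,y)` -/
def phiX (ϕ : ℝ → ℝ → ℝ → ℝ) (t x y : ℝ) : ℝ := deriv (fun x' => ϕ t x' y) x

/-- `∂_yϕ(t,x,y)` -/
def phiY (ϕ : ℝ → ℝ → ℝ → ℝ) (t x y : ℝ) : ℝ := deriv (fun y' => ϕ t x y') y

/-- `∂ₜϕ(t,x,y)` -/
def phiT (ϕ : ℝ → ℝ → ℝ → ℝ) (t x y : ℝ) : ℝ := deriv (fun s => ϕ s x y) t

/-- `∂ₓη(t,x)` -/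
def etaX (η : ℝ → ℝ → ℝ) (t x : ℝ) : ℝ := deriv (fun x' => η t x') x

/-- `∂ₜη(t,x)` -/
def etaT (η : ℝ → ℝ → ℝ) (t x : ℝ) : ℝ := deriv (fun s => η s x) t

/-- the trace `ψ(t,x) = ϕ(t,x,η(t,x))` -/
def psi (η : ℝ → ℝ → ℝ) (ϕ : ℝ → ℝ → ℝ → ℝ) (t x : ℝ) : ℝ := ϕ t x (η t x)

/-- `∂ₜψ(t,x)` -/
def psiT (η : ℝ → ℝ → ℝ) (ϕ : ℝ → ℝ → ℝ → ℝ) (t x : ℝ) : ℝ :=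
  deriv (fun s => psi η ϕ s x) t

/-- `∂ₓψ(t,x)` -/
def psiX (η : ℝ → ℝ → ℝ) (ϕ : ℝ → ℝ → ℝ → ℝ) (t x : ℝ) : ℝ :=
  deriv (fun x' => psi η ϕ t x') x

/-- `Θ(t,x) = -η ∂ₜψ - (g/2) η²` -/
def Theta (g : ℝ) (η : ℝ → ℝ → ℝ) (ϕ : ℝ → ℝ → ℝ → ℝ) (t x : ℝ) : ℝ :=
  -(η t x) * psiT η ϕ t x - g / 2 * (η t x) ^ 2

/-- the energy `𝓗(t)` -/
def energy2D (L₁ h g : ℝ) (η : ℝ → ℝ → ℝ) (ϕ : ℝ → ℝ → ℝ → ℝ) (t : ℝ) : ℝ :=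
  g / 2 * (∫ x in (0:ℝ)..L₁, (η t x) ^ 2)
    + 1 / 2 * ∫ x in (0:ℝ)..L₁, ∫ y in (-h)..(η t x),
        ((phiX ϕ t x y) ^ 2 + (phiY ϕ t x y) ^ 2)

/-- A smooth solution of the two-dimensional water-wave system on `[0,T]`:
`η : [0,T] × [0,L₁] → ℝ` and `ϕ` on the fluid domain (both given as smooth total
functions), satisfying the incompressibility, boundary, kinematic and Bernoulli
(dynamic) conditions, together with `η ≥ -h/2`, zero mean, and the right-angle
contact conditions `∂ₓη(t,0) = ∂ₓη(t,L₁) = 0`. -/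
structure IsWW2D (L₁ h g T : ℝ) (η : ℝ → ℝ → ℝ) (ϕ : ℝ → ℝ → ℝ → ℝ) : Prop where
  smooth_eta : ContDiff ℝ (⊤ : ℕ∞) (fun p : ℝ × ℝ => η p.1 p.2)
  smooth_phi : ContDiff ℝ (⊤ : ℕ∞) (fun p : ℝ × ℝ × ℝ => ϕ p.1 p.2.1 p.2.2)
  eta_lower : ∀ t ∈ Icc (0:ℝ) T, ∀ x ∈ Icc (0:ℝ) L₁, -h / 2 ≤ η t x
  eta_mean : ∀ t ∈ Icc (0:ℝ) T, (∫ x in (0:ℝ)..L₁, η t x) = 0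
  laplace : ∀ t ∈ Icc (0:ℝ) T, ∀ x ∈ Icc (0:ℝ) L₁, ∀ y ∈ Icc (-h) (η t x),
    deriv (fun x' => phiX ϕ t x' y) x + deriv (fun y' => phiY ϕ t x y') y = 0
  bc_left : ∀ t ∈ Icc (0:ℝ) T, ∀ y ∈ Icc (-h) (η t 0), phiX ϕ t 0 y = 0
  bc_right : ∀ t ∈ Icc (0:ℝ) T, ∀ y ∈ Icc (-h) (η t L₁), phiX ϕ t L₁ y = 0
  bc_bottom : ∀ t ∈ Icc (0:ℝ) T, ∀ x ∈ Icc (0:ℝ) L₁, phiY ϕ t x (-h) = 0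
  kinematic : ∀ t ∈ Icc (0:ℝ) T, ∀ x ∈ Icc (0:ℝ) L₁,
    etaT η t x = phiY ϕ t x (η t x) - etaX η t x * phiX ϕ t x (η t x)
  bernoulli : ∀ t ∈ Icc (0:ℝ) T, ∀ x ∈ Icc (0:ℝ) L₁,
    phiT ϕ t x (η t x)
      + 1 / 2 * ((phiX ϕ t x (η t x)) ^ 2 + (phiY ϕ t x (η t x)) ^ 2) + g * η t x = 0
  etaX_left : ∀ t ∈ Icc (0:ℝ) T, etaX η t 0 = 0
  etaX_right : ∀ t ∈ Icc (0:ℝ) T, etaX η t L₁ = 0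

/-!
At a fixed time, the trace-free stress tensor `∇ϕ ⊗ ∇ϕ - |∇ϕ|² I / 2` of a harmonic potential is
divergence-free. Testing it with the dilation field `(x, y)`, which is conformal, leaves only
boundary terms, and these are exactly the wall term `∫ (∂_yϕ)² (L, y) dy` and the bottom term
`∫ (∂ₓϕ)² (x, -h) dx`. Testing it with the vertical field `(0, η)` leaves in addition a bulk term
controlled by the slope of `η`. On the free surface, the kinematic condition and Bernoulli's law
turn the vertical component of the traction into `∂ₜψ + g η` and the horizontal one into
`∂ₜη ∂ₓψ - ∂ₓη (∂ₜψ + g η)`.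

Differentiating the virial `V(t) = ∫ η (x ∂ₓψ + ψ / 4) dx` in time produces `-L Θ(t, L)` plus
these tractions plus half the energy, so that
`V' + L Θ(t, L) ≥ (2 - 7 B) / 4 · 𝓗 + (L / 2) ∫ (∂_yϕ)² + (h / 16) ∫ (∂ₓϕ)²`.
Integrating in time, the boundary terms `V(0)` and `V(T)` are each at most `(5 / 2) (L A / √g) 𝓗`
by Cauchy–Schwarz and Poincaré, and a large `T` absorbs them.
-/

open scoped ContDiff

/-- The derivative of `f` in its first variable. -/
def partialFst (f : ℝ → ℝ → ℝ) (x y : ℝ) : ℝ := deriv (fun s => f s y) x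

/-- The derivative of `f` in its second variable. -/
def partialSnd (f : ℝ → ℝ → ℝ) (x y : ℝ) : ℝ := deriv (fun s => f x s) y

section PartialDerivatives

variable {E : Type*} [NormedAddCommGroup E] [NormedSpace ℝ E] {f : ℝ → ℝ → ℝ}

theorem partialFst_fun_fst (k : ℝ → ℝ) (x y : ℝ) : partialFst (fun s _ => k s) x y = deriv k x :=
  rfl

theorem partialFst_fun_snd (k : ℝ → ℝ) (x y : ℝ) : partialFst (fun _ s => k s) x y = 0 :=
  deriv_const x (k y)

theorem partialSnd_fun_fst (k : ℝ → ℝ) (x y : ℝ) : partialSnd (fun s _ => k s) x y = 0 :=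
  deriv_const y (k x)

theorem partialSnd_fun_snd (k : ℝ → ℝ) (x y : ℝ) : partialSnd (fun _ s => k s) x y = deriv k y :=
  rfl

theorem contDiff_deriv_apply {F : E → ℝ → ℝ} {u : E → ℝ}
    (hF : ContDiff ℝ ∞ fun p : E × ℝ => F p.1 p.2) (hu : ContDiff ℝ ∞ u) :
    ContDiff ℝ ∞ fun z => deriv (F z) (u z) :=
  (hF.fderiv hu (by simp)).clm_apply contDiff_const

@[fun_prop]
theorem contDiff_partialFst {u v : E → ℝ} (hf : ContDiff ℝ ∞ fun p : ℝ × ℝ => f p.1 p.2)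
    (hu : ContDiff ℝ ∞ u) (hv : ContDiff ℝ ∞ v) :
    ContDiff ℝ ∞ fun z => partialFst f (u z) (v z) :=
  contDiff_deriv_apply (by fun_prop) hu

@[fun_prop]
theorem contDiff_partialSnd {u v : E → ℝ} (hf : ContDiff ℝ ∞ fun p : ℝ × ℝ => f p.1 p.2)
    (hu : ContDiff ℝ ∞ u) (hv : ContDiff ℝ ∞ v) :
    ContDiff ℝ ∞ fun z => partialSnd f (u z) (v z) :=
  contDiff_deriv_apply (by fun_prop) hv

theorem hasDerivAt_partialFst (hf : ContDiff ℝ ∞ fun p : ℝ × ℝ => f p.1 p.2) (x y : ℝ) :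
    HasDerivAt (fun s => f s y) (partialFst f x y) x :=
  ((by fun_prop : ContDiff ℝ ∞ fun s => f s y).differentiable (by simp) x).hasDerivAt

theorem hasDerivAt_partialSnd (hf : ContDiff ℝ ∞ fun p : ℝ × ℝ => f p.1 p.2) (x y : ℝ) :
    HasDerivAt (fun s => f x s) (partialSnd f x y) y :=
  ((by fun_prop : ContDiff ℝ ∞ fun s => f x s).differentiable (by simp) y).hasDerivAt

theorem fderiv_apply_eq_partial (hf : ContDiff ℝ ∞ fun p : ℝ × ℝ => f p.1 p.2) (p v : ℝ × ℝ) :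
    fderiv ℝ (fun p : ℝ × ℝ => f p.1 p.2) p v
      = v.1 * partialFst f p.1 p.2 + v.2 * partialSnd f p.1 p.2 := by
  have hfp := (hf.differentiable (by simp) p).hasFDerivAt
  have hfst : partialFst f p.1 p.2 = _ := (hfp.comp_hasDerivAt p.1 (f := fun s => (s, p.2))
    ((hasDerivAt_id p.1).prodMk (hasDerivAt_const p.1 p.2))).deriv
  have hsnd : partialSnd f p.1 p.2 = _ := (hfp.comp_hasDerivAt p.2 (f := fun s => (p.1, s))
    ((hasDerivAt_const p.2 p.1).prodMk (hasDerivAt_id p.2))).deriv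
  rw [hfst, hsnd, ← smul_eq_mul, ← smul_eq_mul, ← map_smul, ← map_smul, ← map_add]
  simp

theorem hasDerivAt_comp_graph (hf : ContDiff ℝ ∞ fun p : ℝ × ℝ => f p.1 p.2) {a : ℝ → ℝ}
    {a' x : ℝ} (ha : HasDerivAt a a' x) :
    HasDerivAt (fun s => f s (a s)) (partialFst f x (a x) + a' * partialSnd f x (a x)) x := by
  have := (hf.differentiable (by simp) (x, a x)).hasFDerivAt.comp_hasDerivAt x
    (f := fun s => (s, a s)) ((hasDerivAt_id x).prodMk ha)
  exact this.congr_deriv (by simp only [fderiv_apply_eq_partial hf, one_mul])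

theorem partialFst_partialSnd_comm (hf : ContDiff ℝ ∞ fun p : ℝ × ℝ => f p.1 p.2) (x y : ℝ) :
    partialFst (partialSnd f) x y = partialSnd (partialFst f) x y := by
  set F : ℝ × ℝ → ℝ := fun p => f p.1 p.2
  have hF' : HasFDerivAt (fderiv ℝ F) (fderiv ℝ (fderiv ℝ F) (x, y)) (x, y) :=
    ((hf.fderiv_right (m := ∞) (by simp)).differentiable (by simp) _).hasFDerivAt
  have hfst : partialFst (partialSnd f) x y = fderiv ℝ (fderiv ℝ F) (x, y) (1, 0) (0, 1) := by
    have := (hF'.comp_hasDerivAt x (f := fun s => (s, y))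
      ((hasDerivAt_id x).prodMk (hasDerivAt_const x y))).clm_apply (hasDerivAt_const x (0, 1))
    simpa [F, fderiv_apply_eq_partial hf, partialFst] using this.deriv
  have hsnd : partialSnd (partialFst f) x y = fderiv ℝ (fderiv ℝ F) (x, y) (0, 1) (1, 0) := by
    have := (hF'.comp_hasDerivAt y (f := fun s => (x, s))
      ((hasDerivAt_const y x).prodMk (hasDerivAt_id y))).clm_apply (hasDerivAt_const y (1, 0))
    simpa [F, fderiv_apply_eq_partial hf, partialSnd] using this.deriv
  rw [hfst, hsnd]
  exact second_derivative_symmetric (fun p => (hf.differentiable (by simp) p).hasFDerivAt) hF' _ _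

end PartialDerivatives

section IntegralsUnderGraphs

@[fun_prop]
theorem continuous_integral_under_graph {X : Type*} [TopologicalSpace X] {f : X → ℝ → ℝ}
    {a : X → ℝ} {c : ℝ} (hf : Continuous fun p : X × ℝ => f p.1 p.2) (ha : Continuous a) :
    Continuous fun x => ∫ y in c..a x, f x y :=
  intervalIntegral.continuous_parametric_intervalIntegral_of_continuous hf ha

theorem intervalIntegral_congr_Icc {f g : ℝ → ℝ} {a b : ℝ} (hab : a ≤ b)
    (h : ∀ x ∈ Icc a b, f x = g x) : ∫ x in a..b, f x = ∫ x in a..b, g x :=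
  intervalIntegral.integral_congr fun x hx => h x (uIcc_of_le hab ▸ hx)

theorem integral_under_graph_congr {f g : ℝ → ℝ → ℝ} {a : ℝ → ℝ} {c p q : ℝ} (hpq : p ≤ q)
    (hca : ∀ x ∈ Icc p q, c ≤ a x) (h : ∀ x ∈ Icc p q, ∀ y ∈ Icc c (a x), f x y = g x y) :
    ∫ x in p..q, ∫ y in c..a x, f x y = ∫ x in p..q, ∫ y in c..a x, g x y :=
  intervalIntegral_congr_Icc hpq fun x hx => intervalIntegral_congr_Icc (hca x hx) (h x hx)

variable {f f' : ℝ → ℝ → ℝ}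

theorem hasDerivAt_integral_of_continuous (hf : Continuous fun p : ℝ × ℝ => f p.1 p.2)
    (hf' : Continuous fun p : ℝ × ℝ => f' p.1 p.2)
    (hff' : ∀ t x, HasDerivAt (fun s => f s x) (f' t x) t) (c d t₀ : ℝ) :
    HasDerivAt (fun t => ∫ x in c..d, f t x) (∫ x in c..d, f' t₀ x) t₀ := by
  obtain ⟨C, hC⟩ := ((isCompact_Icc (a := t₀ - 1) (b := t₀ + 1)).prod
    (isCompact_uIcc (a := c) (b := d))).exists_bound_of_continuousOn hf'.continuousOn
  have hf_t (t : ℝ) : Continuous (f t) := by fun_prop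
  have hf'_t (t : ℝ) : Continuous (f' t) := by fun_prop
  exact (intervalIntegral.hasDerivAt_integral_of_dominated_loc_of_deriv_le
    (bound := fun _ => C) (Icc_mem_nhds (by linarith) (by linarith))
    (.of_forall fun t => (hf_t t).aestronglyMeasurable) ((hf_t t₀).intervalIntegrable _ _)
    (hf'_t t₀).aestronglyMeasurable
    (.of_forall fun x hx t ht => hC (t, x) ⟨ht, uIoc_subset_uIcc hx⟩)
    intervalIntegrable_const (.of_forall fun x _ t _ => hff' t x)).2

theorem hasDerivAt_integral_under_graph (hf : Continuous fun p : ℝ × ℝ => f p.1 p.2)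
    (hf' : Continuous fun p : ℝ × ℝ => f' p.1 p.2)
    (hff' : ∀ t x, HasDerivAt (fun s => f s x) (f' t x) t) {a : ℝ → ℝ} {a' t₀ : ℝ}
    (ha : HasDerivAt a a' t₀) (c : ℝ) :
    HasDerivAt (fun t => ∫ x in c..a t, f t x)
      ((∫ x in c..a t₀, f' t₀ x) + a' * f t₀ (a t₀)) t₀ := by
  let toCLM := ContinuousLinearMap.toSpanSingletonLIE ℝ ℝ
  have hI := hasStrictFDerivAt_uncurry_coprod (u := (t₀, a t₀))
    (f := fun t b => ∫ x in c..b, f t x)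
    (f₁ := fun t b => toCLM (∫ x in c..b, f' t x)) (f₂ := fun t b => toCLM (f t b))
    (.of_forall fun v => hasDerivAt_integral_of_continuous hf hf' hff' c v.2 v.1)
    (.of_forall fun v =>
      ((by fun_prop : Continuous (f v.1)).integral_hasStrictDerivAt c v.2).hasDerivAt)
    (toCLM.continuous.comp
      (by fun_prop : Continuous fun v : ℝ × ℝ => ∫ x in c..v.2, f' v.1 x)).continuousAt
    (toCLM.continuous.comp hf).continuousAt
  exact (hI.hasFDerivAt.comp_hasDerivAt t₀ (f := fun t => (t, a t))
    ((hasDerivAt_id t₀).prodMk ha)).congr_deriv (by simp [toCLM, Function.HasUncurry.uncurry])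

theorem integral_divergence_under_graph {F F' G G' : ℝ → ℝ → ℝ} {a a' : ℝ → ℝ}
    (hF : Continuous fun p : ℝ × ℝ => F p.1 p.2) (hF' : Continuous fun p : ℝ × ℝ => F' p.1 p.2)
    (hG : Continuous fun p : ℝ × ℝ => G p.1 p.2) (hG' : Continuous fun p : ℝ × ℝ => G' p.1 p.2)
    (hFF' : ∀ x y, HasDerivAt (fun s => F s y) (F' x y) x)
    (hGG' : ∀ x y, HasDerivAt (fun s => G x s) (G' x y) y)
    (haa' : ∀ x, HasDerivAt a (a' x) x) (ha' : Continuous a') (p q c : ℝ) :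
    ∫ x in p..q, ∫ y in c..a x, (F' x y + G' x y) =
      (∫ x in p..q, (G x (a x) - a' x * F x (a x))) - (∫ x in p..q, G x c)
        + (∫ y in c..a q, F q y) - ∫ y in c..a p, F p y := by
  have ha : Continuous a := continuous_iff_continuousAt.2 fun x => (haa' x).continuousAt
  have inner (x : ℝ) : ∫ y in c..a x, (F' x y + G' x y) =
      ((∫ y in c..a x, F' x y) + a' x * F x (a x)) + ((G x (a x) - a' x * F x (a x)) - G x c) := by
    rw [intervalIntegral.integral_add (Continuous.intervalIntegrable (by fun_prop) _ _)
      (Continuous.intervalIntegrable (by fun_prop) _ _),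
      intervalIntegral.integral_eq_sub_of_hasDerivAt (fun y _ => hGG' x y)
        (Continuous.intervalIntegrable (by fun_prop) _ _)]
    ring
  have outer := intervalIntegral.integral_eq_sub_of_hasDerivAt (a := p) (b := q)
    (fun x _ => hasDerivAt_integral_under_graph hF hF' hFF' (haa' x) c)
    (Continuous.intervalIntegrable (by fun_prop) _ _)
  simp_rw [inner]
  rw [intervalIntegral.integral_add (Continuous.intervalIntegrable (by fun_prop) _ _)
      (Continuous.intervalIntegrable (by fun_prop) _ _), outer,
    intervalIntegral.integral_sub (Continuous.intervalIntegrable (by fun_prop) _ _)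
      (Continuous.intervalIntegrable (by fun_prop) _ _)]
  ring

end IntegralsUnderGraphs

section Inequalities

theorem abs_integral_mul_le_sqrt_mul_sqrt {α : Type*} [MeasurableSpace α] {μ : Measure α}
    {f g : α → ℝ} (hf : MemLp f 2 μ) (hg : MemLp g 2 μ) :
    |∫ x, f x * g x ∂μ| ≤ √(∫ x, f x ^ 2 ∂μ) * √(∫ x, g x ^ 2 ∂μ) := by
  have holder := integral_mul_norm_le_Lp_mul_Lq (μ := μ) (f := f) (g := g)
    (by constructor <;> norm_num : (2 : ℝ).HolderConjugate 2) (by simpa using hf)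
    (by simpa using hg)
  simp only [Real.norm_eq_abs, Real.rpow_two, sq_abs, ← Real.sqrt_eq_rpow] at holder
  calc |∫ x, f x * g x ∂μ| ≤ ∫ x, |f x * g x| ∂μ := abs_integral_le_integral_abs
    _ = ∫ x, |f x| * |g x| ∂μ := by simp only [abs_mul]
    _ ≤ _ := holder

variable {f g : ℝ → ℝ} {a b : ℝ}

theorem abs_intervalIntegral_mul_le_sqrt_mul_sqrt (hf : Continuous f) (hg : Continuous g)
    (hab : a ≤ b) :
    |∫ x in a..b, f x * g x| ≤ √(∫ x in a..b, f x ^ 2) * √(∫ x in a..b, g x ^ 2) := by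
  have memLp {k : ℝ → ℝ} (hk : Continuous k) : MemLp k 2 (volume.restrict (Ioc a b)) :=
    (memLp_two_iff_integrable_sq hk.aestronglyMeasurable).2
      ((hk.pow 2).intervalIntegrable (μ := volume) a b).1
  simpa only [intervalIntegral.integral_of_le hab] using
    abs_integral_mul_le_sqrt_mul_sqrt (memLp hf) (memLp hg)

variable {L : ℝ} {p p' : ℝ → ℝ}

theorem sqrt_integral_id_mul_sq_le (hp' : Continuous p') (hL : 0 ≤ L) :
    √(∫ x in 0..L, (x * p' x) ^ 2) ≤ L * √(∫ x in 0..L, p' x ^ 2) := by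
  rw [← Real.sqrt_sq hL, ← Real.sqrt_mul (sq_nonneg L), Real.sqrt_sq hL,
    ← intervalIntegral.integral_const_mul]
  refine Real.sqrt_le_sqrt (intervalIntegral.integral_mono_on hL
    (Continuous.intervalIntegrable (by fun_prop) _ _)
    (Continuous.intervalIntegrable (by fun_prop) _ _) fun x hx => ?_)
  rw [mul_pow]
  gcongr
  exacts [hx.1, hx.2]

theorem sqrt_integral_sub_sq_le (hpp' : ∀ x, HasDerivAt p (p' x) x) (hp' : Continuous p')
    (hL : 0 ≤ L) :
    √(∫ x in 0..L, (p x - p 0) ^ 2) ≤ L * √(∫ x in 0..L, p' x ^ 2) := by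
  have hp : Continuous p := continuous_iff_continuousAt.2 fun x => (hpp' x).continuousAt
  have nonneg (a b : ℝ) (hab : a ≤ b) : 0 ≤ ∫ s in a..b, p' s ^ 2 :=
    intervalIntegral.integral_nonneg hab fun _ _ => sq_nonneg _
  have pointwise (x : ℝ) (hx : x ∈ Icc 0 L) : (p x - p 0) ^ 2 ≤ L * ∫ s in 0..L, p' s ^ 2 := by
    have cs := abs_intervalIntegral_mul_le_sqrt_mul_sqrt hp' (continuous_const (y := (1 : ℝ))) hx.1
    simp only [mul_one, one_pow, intervalIntegral.integral_const, sub_zero, smul_eq_mul,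
      intervalIntegral.integral_eq_sub_of_hasDerivAt (fun s _ => hpp' s)
        (hp'.intervalIntegrable 0 x), ← Real.sqrt_mul (nonneg 0 x hx.1)] at cs
    have mono : ∫ s in 0..x, p' s ^ 2 ≤ ∫ s in 0..L, p' s ^ 2 :=
      intervalIntegral.integral_mono_interval le_rfl hx.1 hx.2
        (.of_forall fun _ => sq_nonneg _) ((hp'.pow 2).intervalIntegrable _ _)
    calc (p x - p 0) ^ 2 ≤ (∫ s in 0..x, p' s ^ 2) * x :=
          sq_abs (p x - p 0) ▸
            (Real.le_sqrt (abs_nonneg _) (mul_nonneg (nonneg 0 x hx.1) hx.1)).1 cs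
      _ ≤ (∫ s in 0..L, p' s ^ 2) * L :=
          mul_le_mul mono hx.2 hx.1 (nonneg 0 L hL)
      _ = L * ∫ s in 0..L, p' s ^ 2 := mul_comm _ _
  have integrated : ∫ x in 0..L, (p x - p 0) ^ 2 ≤ L ^ 2 * ∫ s in 0..L, p' s ^ 2 :=
    calc ∫ x in 0..L, (p x - p 0) ^ 2 ≤ ∫ _ in 0..L, L * ∫ s in 0..L, p' s ^ 2 :=
          intervalIntegral.integral_mono_on hL (Continuous.intervalIntegrable (by fun_prop) _ _)
            intervalIntegrable_const pointwise
      _ = L ^ 2 * ∫ s in 0..L, p' s ^ 2 := by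
          rw [intervalIntegral.integral_const, smul_eq_mul]; ring
  calc √(∫ x in 0..L, (p x - p 0) ^ 2) ≤ √(L ^ 2 * ∫ s in 0..L, p' s ^ 2) :=
        Real.sqrt_le_sqrt integrated
    _ = L * √(∫ x in 0..L, p' x ^ 2) := by rw [Real.sqrt_mul (sq_nonneg L), Real.sqrt_sq hL]

theorem abs_integral_mul_id_mul_deriv_add_le (hf : Continuous f)
    (hpp' : ∀ x, HasDerivAt p (p' x) x) (hp' : Continuous p') (hL : 0 ≤ L)
    (hf₀ : ∫ x in 0..L, f x = 0) (c : ℝ) :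
    |∫ x in 0..L, f x * (x * p' x + c * p x)|
      ≤ (1 + |c|) * L * (√(∫ x in 0..L, f x ^ 2) * √(∫ x in 0..L, p' x ^ 2)) := by
  have hp : Continuous p := continuous_iff_continuousAt.2 fun x => (hpp' x).continuousAt
  -- `p` may be replaced by `p - p 0`, which Poincaré's inequality controls, as `f` has mean zero.
  have split : ∫ x in 0..L, f x * (x * p' x + c * p x) =
      (∫ x in 0..L, f x * (x * p' x)) + c * ∫ x in 0..L, f x * (p x - p 0) := by
    calc ∫ x in 0..L, f x * (x * p' x + c * p x)
        = ∫ x in 0..L, (f x * (x * p' x) + c * (f x * (p x - p 0)) + c * p 0 * f x) :=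
          intervalIntegral.integral_congr fun x _ => by ring
      _ = _ := by
          rw [intervalIntegral.integral_add (Continuous.intervalIntegrable (by fun_prop) _ _)
              (Continuous.intervalIntegrable (by fun_prop) _ _),
            intervalIntegral.integral_add (Continuous.intervalIntegrable (by fun_prop) _ _)
              (Continuous.intervalIntegrable (by fun_prop) _ _),
            intervalIntegral.integral_const_mul, intervalIntegral.integral_const_mul, hf₀,
            mul_zero, add_zero]
  have dilation := abs_intervalIntegral_mul_le_sqrt_mul_sqrt hf
    (by fun_prop : Continuous fun x => x * p' x) hL
  have oscillation := abs_intervalIntegral_mul_le_sqrt_mul_sqrt hf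
    (by fun_prop : Continuous fun x => p x - p 0) hL
  calc |∫ x in 0..L, f x * (x * p' x + c * p x)|
      ≤ |∫ x in 0..L, f x * (x * p' x)| + |c| * |∫ x in 0..L, f x * (p x - p 0)| := by
        rw [split, ← abs_mul]; exact abs_add_le _ _
    _ ≤ √(∫ x in 0..L, f x ^ 2) * (L * √(∫ x in 0..L, p' x ^ 2))
        + |c| * (√(∫ x in 0..L, f x ^ 2) * (L * √(∫ x in 0..L, p' x ^ 2))) := by
        gcongr
        · exact dilation.trans (by gcongr; exact sqrt_integral_id_mul_sq_le hp' hL)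
        · exact oscillation.trans (by gcongr; exact sqrt_integral_sub_sq_le hpp' hp' hL)
    _ = (1 + |c|) * L * (√(∫ x in 0..L, f x ^ 2) * √(∫ x in 0..L, p' x ^ 2)) := by ring

end Inequalities

/-- A velocity potential `u` at a fixed time, in the fluid domain `0 ≤ x ≤ L`, `-h ≤ y ≤ a x`
bounded by two walls, a flat bottom and the free surface `y = a x`: harmonic in the domain, with
vanishing normal derivative on the walls and the bottom. The values of `u` outside the domain are
constrained only by smoothness. -/
structure IsFluidPotential (L h : ℝ) (a : ℝ → ℝ) (u : ℝ → ℝ → ℝ) : Prop where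
  contDiff_surface : ContDiff ℝ ∞ a
  contDiff_potential : ContDiff ℝ ∞ fun p : ℝ × ℝ => u p.1 p.2
  bottom_le : ∀ x ∈ Icc 0 L, -h ≤ a x
  laplace : ∀ x ∈ Icc 0 L, ∀ y ∈ Icc (-h) (a x),
    partialFst (partialFst u) x y + partialSnd (partialSnd u) x y = 0
  left_wall : ∀ y ∈ Icc (-h) (a 0), partialFst u 0 y = 0
  right_wall : ∀ y ∈ Icc (-h) (a L), partialFst u L y = 0
  bottom : ∀ x ∈ Icc 0 L, partialSnd u x (-h) = 0

/-- The normal component `(uₓ² - u_y²) / 2` of the trace-free stress tensor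
`∇u ⊗ ∇u - |∇u|² I / 2`. -/
def normalStress (u : ℝ → ℝ → ℝ) (x y : ℝ) : ℝ :=
  1 / 2 * (partialFst u x y ^ 2 - partialSnd u x y ^ 2)

/-- The off-diagonal component `uₓ u_y` of the trace-free stress tensor
`∇u ⊗ ∇u - |∇u|² I / 2`. -/
def shearStress (u : ℝ → ℝ → ℝ) (x y : ℝ) : ℝ := partialFst u x y * partialSnd u x y

/-- The horizontal component of the trace-free stress tensor applied to the upward normal
`(-a', 1)` of the surface `y = a x`. -/
def tractionX (a : ℝ → ℝ) (u : ℝ → ℝ → ℝ) (x : ℝ) : ℝ :=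
  shearStress u x (a x) - deriv a x * normalStress u x (a x)

/-- The vertical component of the trace-free stress tensor applied to the upward normal
`(-a', 1)` of the surface `y = a x`. -/
def tractionY (a : ℝ → ℝ) (u : ℝ → ℝ → ℝ) (x : ℝ) : ℝ :=
  -normalStress u x (a x) - deriv a x * shearStress u x (a x)

/-- The integral of `|∇u|²` over the fluid domain `0 ≤ x ≤ L`, `-h ≤ y ≤ a x`. -/
def dirichletEnergy (L h : ℝ) (a : ℝ → ℝ) (u : ℝ → ℝ → ℝ) : ℝ :=
  ∫ x in 0..L, ∫ y in (-h)..a x, (partialFst u x y ^ 2 + partialSnd u x y ^ 2)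

section StressTensor

variable {u : ℝ → ℝ → ℝ}

@[fun_prop]
theorem contDiff_normalStress {E : Type*} [NormedAddCommGroup E] [NormedSpace ℝ E] {v w : E → ℝ}
    (hu : ContDiff ℝ ∞ fun p : ℝ × ℝ => u p.1 p.2) (hv : ContDiff ℝ ∞ v) (hw : ContDiff ℝ ∞ w) :
    ContDiff ℝ ∞ fun z => normalStress u (v z) (w z) := by
  unfold normalStress
  fun_prop

@[fun_prop]
theorem contDiff_shearStress {E : Type*} [NormedAddCommGroup E] [NormedSpace ℝ E] {v w : E → ℝ}
    (hu : ContDiff ℝ ∞ fun p : ℝ × ℝ => u p.1 p.2) (hv : ContDiff ℝ ∞ v) (hw : ContDiff ℝ ∞ w) :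
    ContDiff ℝ ∞ fun z => shearStress u (v z) (w z) := by
  unfold shearStress
  fun_prop

theorem partialFst_normalStress_add_partialSnd_shearStress
    (hu : ContDiff ℝ ∞ fun p : ℝ × ℝ => u p.1 p.2) (x y : ℝ) :
    partialFst (normalStress u) x y + partialSnd (shearStress u) x y =
      partialFst u x y * (partialFst (partialFst u) x y + partialSnd (partialSnd u) x y) := by
  have hnormal : partialFst (normalStress u) x y = _ :=
    ((((hasDerivAt_partialFst (f := partialFst u) (by fun_prop) x y).fun_pow 2).fun_sub
      ((hasDerivAt_partialFst (f := partialSnd u) (by fun_prop) x y).fun_pow 2)).const_mul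
        (1 / 2)).deriv
  have hshear : partialSnd (shearStress u) x y = _ :=
    ((hasDerivAt_partialSnd (f := partialFst u) (by fun_prop) x y).fun_mul
      (hasDerivAt_partialSnd (f := partialSnd u) (by fun_prop) x y)).deriv
  rw [hnormal, hshear, partialFst_partialSnd_comm hu]
  ring

theorem partialFst_shearStress_sub_partialSnd_normalStress
    (hu : ContDiff ℝ ∞ fun p : ℝ × ℝ => u p.1 p.2) (x y : ℝ) :
    partialFst (shearStress u) x y - partialSnd (normalStress u) x y =
      partialSnd u x y * (partialFst (partialFst u) x y + partialSnd (partialSnd u) x y) := by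
  have hnormal : partialSnd (normalStress u) x y = _ :=
    ((((hasDerivAt_partialSnd (f := partialFst u) (by fun_prop) x y).fun_pow 2).fun_sub
      ((hasDerivAt_partialSnd (f := partialSnd u) (by fun_prop) x y).fun_pow 2)).const_mul
        (1 / 2)).deriv
  have hshear : partialFst (shearStress u) x y = _ :=
    ((hasDerivAt_partialFst (f := partialFst u) (by fun_prop) x y).fun_mul
      (hasDerivAt_partialFst (f := partialSnd u) (by fun_prop) x y)).deriv
  rw [hnormal, hshear, partialFst_partialSnd_comm hu]
  ring

theorem integral_divergence_stress_contraction {a : ℝ → ℝ} {α β : ℝ → ℝ → ℝ}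
    (hu : ContDiff ℝ ∞ fun p : ℝ × ℝ => u p.1 p.2) (hα : ContDiff ℝ ∞ fun p : ℝ × ℝ => α p.1 p.2)
    (hβ : ContDiff ℝ ∞ fun p : ℝ × ℝ => β p.1 p.2) (ha : ContDiff ℝ ∞ a) (p q c : ℝ) :
    ∫ x in p..q, ∫ y in c..a x, ((partialFst α x y - partialSnd β x y) * normalStress u x y
      + (partialSnd α x y + partialFst β x y) * shearStress u x y
      + (α x y * partialFst u x y + β x y * partialSnd u x y)
        * (partialFst (partialFst u) x y + partialSnd (partialSnd u) x y)) =
    (∫ x in p..q, (α x (a x) * tractionX a u x + β x (a x) * tractionY a u x))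
      - (∫ x in p..q, (α x c * shearStress u x c - β x c * normalStress u x c))
      + (∫ y in c..a q, (α q y * normalStress u q y + β q y * shearStress u q y))
      - ∫ y in c..a p, (α p y * normalStress u p y + β p y * shearStress u p y) := by
  have hnormal : ContDiff ℝ ∞ fun p : ℝ × ℝ => normalStress u p.1 p.2 := by fun_prop
  have hshear : ContDiff ℝ ∞ fun p : ℝ × ℝ => shearStress u p.1 p.2 := by fun_prop
  have div := integral_divergence_under_graph (p := p) (q := q) (c := c)
    (by fun_prop) (by fun_prop) (by fun_prop) (by fun_prop)
    (fun x y => ((hasDerivAt_partialFst hα x y).fun_mul (hasDerivAt_partialFst hnormal x y)).fun_add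
      ((hasDerivAt_partialFst hβ x y).fun_mul (hasDerivAt_partialFst hshear x y)))
    (fun x y => ((hasDerivAt_partialSnd hα x y).fun_mul (hasDerivAt_partialSnd hshear x y)).fun_sub
      ((hasDerivAt_partialSnd hβ x y).fun_mul (hasDerivAt_partialSnd hnormal x y)))
    (fun x => (ha.differentiable (by simp) x).hasDerivAt) (ha.continuous_deriv (by simp))
  have top : ∫ x in p..q, (α x (a x) * shearStress u x (a x) - β x (a x) * normalStress u x (a x)
        - deriv a x * (α x (a x) * normalStress u x (a x) + β x (a x) * shearStress u x (a x))) =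
      ∫ x in p..q, (α x (a x) * tractionX a u x + β x (a x) * tractionY a u x) :=
    intervalIntegral.integral_congr fun x _ => by simp only [tractionX, tractionY]; ring
  rw [top] at div
  refine (intervalIntegral.integral_congr fun x _ =>
    intervalIntegral.integral_congr fun y _ => ?_).trans div
  linear_combination
    -α x y * (partialFst_normalStress_add_partialSnd_shearStress hu x y)
    - β x y * (partialFst_shearStress_sub_partialSnd_normalStress hu x y)

theorem abs_shearStress_le (x y : ℝ) :
    |shearStress u x y| ≤ 1 / 2 * (partialFst u x y ^ 2 + partialSnd u x y ^ 2) := by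
  rw [shearStress, abs_mul, ← sq_abs (partialFst u x y), ← sq_abs (partialSnd u x y)]
  linarith [two_mul_le_add_sq |partialFst u x y| |partialSnd u x y|]

end StressTensor

namespace IsFluidPotential

variable {L h : ℝ} {a : ℝ → ℝ} {u : ℝ → ℝ → ℝ}

theorem hasDerivAt_surface (H : IsFluidPotential L h a u) (x : ℝ) :
    HasDerivAt a (deriv a x) x :=
  (H.contDiff_surface.differentiable (by simp) x).hasDerivAt

theorem continuous_deriv_surface (H : IsFluidPotential L h a u) : Continuous (deriv a) :=
  H.contDiff_surface.continuous_deriv (by simp)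

theorem green_first_identity (H : IsFluidPotential L h a u) (hL : 0 ≤ L) {v : ℝ → ℝ → ℝ}
    (hv : ContDiff ℝ ∞ fun p : ℝ × ℝ => v p.1 p.2) :
    ∫ x in 0..L, ∫ y in (-h)..a x,
      (partialFst v x y * partialFst u x y + partialSnd v x y * partialSnd u x y) =
    ∫ x in 0..L, v x (a x) * (partialSnd u x (a x) - deriv a x * partialFst u x (a x)) := by
  have hu := H.contDiff_potential
  have div := integral_divergence_under_graph (p := 0) (q := L) (c := -h)
    (by fun_prop) (by fun_prop) (by fun_prop) (by fun_prop)
    (fun x y => (hasDerivAt_partialFst hv x y).fun_mul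
      (hasDerivAt_partialFst (f := partialFst u) (by fun_prop) x y))
    (fun x y => (hasDerivAt_partialSnd hv x y).fun_mul
      (hasDerivAt_partialSnd (f := partialSnd u) (by fun_prop) x y))
    H.hasDerivAt_surface H.continuous_deriv_surface
  have bottom : ∫ x in 0..L, v x (-h) * partialSnd u x (-h) = ∫ x in 0..L, 0 :=
    intervalIntegral_congr_Icc hL fun x hx => by rw [H.bottom x hx, mul_zero]
  have right : ∫ y in (-h)..a L, v L y * partialFst u L y = ∫ y in (-h)..a L, 0 :=
    intervalIntegral_congr_Icc (H.bottom_le L ⟨hL, le_rfl⟩) fun y hy => by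
      rw [H.right_wall y hy, mul_zero]
  have left : ∫ y in (-h)..a 0, v 0 y * partialFst u 0 y = ∫ y in (-h)..a 0, 0 :=
    intervalIntegral_congr_Icc (H.bottom_le 0 ⟨le_rfl, hL⟩) fun y hy => by
      rw [H.left_wall y hy, mul_zero]
  rw [bottom, right, left] at div
  simp only [intervalIntegral.integral_zero, sub_zero, add_zero] at div
  calc _ = _ := integral_under_graph_congr hL H.bottom_le fun x hx y hy => by
        linear_combination -v x y * H.laplace x hx y hy
    _ = _ := div
    _ = _ := intervalIntegral.integral_congr fun x _ => by ring

theorem dirichletEnergy_eq (H : IsFluidPotential L h a u) (hL : 0 ≤ L) :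
    dirichletEnergy L h a u =
      ∫ x in 0..L, u x (a x) * (partialSnd u x (a x) - deriv a x * partialFst u x (a x)) := by
  rw [← H.green_first_identity hL H.contDiff_potential, dirichletEnergy]
  simp only [sq]

theorem dirichletEnergy_nonneg (H : IsFluidPotential L h a u) (hL : 0 ≤ L) :
    0 ≤ dirichletEnergy L h a u :=
  intervalIntegral.integral_nonneg hL fun x hx =>
    intervalIntegral.integral_nonneg (H.bottom_le x hx) fun _ _ => by positivity

theorem rellich_identity (H : IsFluidPotential L h a u) (hL : 0 ≤ L) {α β : ℝ → ℝ → ℝ}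
    (hα : ContDiff ℝ ∞ fun p : ℝ × ℝ => α p.1 p.2) (hβ : ContDiff ℝ ∞ fun p : ℝ × ℝ => β p.1 p.2) :
    ∫ x in 0..L, ∫ y in (-h)..a x, ((partialFst α x y - partialSnd β x y) * normalStress u x y
      + (partialSnd α x y + partialFst β x y) * shearStress u x y) =
    (∫ x in 0..L, (α x (a x) * tractionX a u x + β x (a x) * tractionY a u x))
      + 1 / 2 * (∫ x in 0..L, β x (-h) * partialFst u x (-h) ^ 2)
      - 1 / 2 * (∫ y in (-h)..a L, α L y * partialSnd u L y ^ 2)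
      + 1 / 2 * ∫ y in (-h)..a 0, α 0 y * partialSnd u 0 y ^ 2 := by
  have bottom : ∫ x in 0..L, (α x (-h) * shearStress u x (-h) - β x (-h) * normalStress u x (-h)) =
      ∫ x in 0..L, -1 / 2 * (β x (-h) * partialFst u x (-h) ^ 2) :=
    intervalIntegral_congr_Icc hL fun x hx => by
      rw [shearStress, normalStress, H.bottom x hx]; ring
  have right : ∫ y in (-h)..a L, (α L y * normalStress u L y + β L y * shearStress u L y) =
      ∫ y in (-h)..a L, -1 / 2 * (α L y * partialSnd u L y ^ 2) :=
    intervalIntegral_congr_Icc (H.bottom_le L ⟨hL, le_rfl⟩) fun y hy => by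
      rw [shearStress, normalStress, H.right_wall y hy]; ring
  have left : ∫ y in (-h)..a 0, (α 0 y * normalStress u 0 y + β 0 y * shearStress u 0 y) =
      ∫ y in (-h)..a 0, -1 / 2 * (α 0 y * partialSnd u 0 y ^ 2) :=
    intervalIntegral_congr_Icc (H.bottom_le 0 ⟨le_rfl, hL⟩) fun y hy => by
      rw [shearStress, normalStress, H.left_wall y hy]; ring
  have div := integral_divergence_stress_contraction H.contDiff_potential hα hβ
    H.contDiff_surface 0 L (-h)
  rw [bottom, right, left] at div
  simp only [intervalIntegral.integral_const_mul] at div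
  calc _ = _ := integral_under_graph_congr hL H.bottom_le fun x hx y hy => by
        rw [H.laplace x hx y hy, mul_zero, add_zero]
    _ = _ := div
    _ = _ := by ring

/-- Dilations are conformal, so the field `(x, y)` produces no bulk term. -/
theorem integral_dilation_traction (H : IsFluidPotential L h a u) (hL : 0 ≤ L) :
    ∫ x in 0..L, (x * tractionX a u x + a x * tractionY a u x) =
      h / 2 * (∫ x in 0..L, partialFst u x (-h) ^ 2)
        + L / 2 * ∫ y in (-h)..a L, partialSnd u L y ^ 2 := by
  have rellich := H.rellich_identity hL (α := fun x _ => x) (β := fun _ y => y)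
    (by fun_prop) (by fun_prop)
  simp only [partialFst_fun_fst, partialSnd_fun_fst, partialFst_fun_snd, partialSnd_fun_snd,
    deriv_id'', sub_self, add_zero, zero_mul, intervalIntegral.integral_zero,
    intervalIntegral.integral_const_mul] at rellich
  linarith

theorem integral_surface_mul_tractionY (H : IsFluidPotential L h a u) (hL : 0 ≤ L) :
    ∫ x in 0..L, a x * tractionY a u x =
      (∫ x in 0..L, ∫ y in (-h)..a x, deriv a x * shearStress u x y)
        - 1 / 2 * ∫ x in 0..L, a x * partialFst u x (-h) ^ 2 := by
  have rellich := H.rellich_identity hL (α := fun _ _ => 0) (β := fun x _ => a x)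
    (by fun_prop) (H.contDiff_surface.comp contDiff_fst)
  simp only [partialFst_fun_fst, partialSnd_fun_fst, deriv_const', sub_self, zero_add, zero_mul,
    intervalIntegral.integral_zero, mul_zero, add_zero, sub_zero] at rellich
  linarith

theorem integral_surface_mul_tractionY_le (H : IsFluidPotential L h a u) (hL : 0 ≤ L) {B : ℝ}
    (hslope : ∀ x ∈ Icc 0 L, |deriv a x| ≤ B) (hlower : ∀ x ∈ Icc 0 L, -h / 2 ≤ a x) :
    ∫ x in 0..L, a x * tractionY a u x ≤
      B / 2 * dirichletEnergy L h a u + h / 4 * ∫ x in 0..L, partialFst u x (-h) ^ 2 := by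
  have hu := H.contDiff_potential
  have ha := H.contDiff_surface
  have ha' := H.continuous_deriv_surface
  have bulk : ∫ x in 0..L, ∫ y in (-h)..a x, deriv a x * shearStress u x y ≤
      ∫ x in 0..L, ∫ y in (-h)..a x, B / 2 * (partialFst u x y ^ 2 + partialSnd u x y ^ 2) := by
    refine intervalIntegral.integral_mono_on hL (Continuous.intervalIntegrable (by fun_prop) _ _)
      (Continuous.intervalIntegrable (by fun_prop) _ _) fun x hx =>
      intervalIntegral.integral_mono_on (H.bottom_le x hx)
        (Continuous.intervalIntegrable (by fun_prop) _ _)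
        (Continuous.intervalIntegrable (by fun_prop) _ _) fun y _ => ?_
    calc deriv a x * shearStress u x y ≤ |deriv a x| * |shearStress u x y| :=
          (le_abs_self _).trans_eq (abs_mul _ _)
      _ ≤ B * (1 / 2 * (partialFst u x y ^ 2 + partialSnd u x y ^ 2)) :=
          mul_le_mul (hslope x hx) (abs_shearStress_le x y) (abs_nonneg _)
            ((abs_nonneg _).trans (hslope x hx))
      _ = _ := by ring
  have floor : ∫ x in 0..L, -h / 2 * partialFst u x (-h) ^ 2 ≤
      ∫ x in 0..L, a x * partialFst u x (-h) ^ 2 :=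
    intervalIntegral.integral_mono_on hL (Continuous.intervalIntegrable (by fun_prop) _ _)
      (Continuous.intervalIntegrable (by fun_prop) _ _) fun x hx =>
      mul_le_mul_of_nonneg_right (hlower x hx) (sq_nonneg _)
  rw [H.integral_surface_mul_tractionY hL, dirichletEnergy]
  simp only [intervalIntegral.integral_const_mul] at bulk floor ⊢
  linarith

end IsFluidPotential

section Smoothness

variable {E : Type*} [NormedAddCommGroup E] [NormedSpace ℝ E] {τ u v : E → ℝ}
  {η : ℝ → ℝ → ℝ} {ϕ : ℝ → ℝ → ℝ → ℝ}

@[fun_prop]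
theorem contDiff_phiX (hϕ : ContDiff ℝ ∞ fun p : ℝ × ℝ × ℝ => ϕ p.1 p.2.1 p.2.2)
    (hτ : ContDiff ℝ ∞ τ) (hu : ContDiff ℝ ∞ u) (hv : ContDiff ℝ ∞ v) :
    ContDiff ℝ ∞ fun z => phiX ϕ (τ z) (u z) (v z) :=
  contDiff_deriv_apply (by fun_prop) hu

@[fun_prop]
theorem contDiff_phiY (hϕ : ContDiff ℝ ∞ fun p : ℝ × ℝ × ℝ => ϕ p.1 p.2.1 p.2.2)
    (hτ : ContDiff ℝ ∞ τ) (hu : ContDiff ℝ ∞ u) (hv : ContDiff ℝ ∞ v) :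
    ContDiff ℝ ∞ fun z => phiY ϕ (τ z) (u z) (v z) :=
  contDiff_deriv_apply (by fun_prop) hv

@[fun_prop]
theorem contDiff_phiT (hϕ : ContDiff ℝ ∞ fun p : ℝ × ℝ × ℝ => ϕ p.1 p.2.1 p.2.2)
    (hτ : ContDiff ℝ ∞ τ) (hu : ContDiff ℝ ∞ u) (hv : ContDiff ℝ ∞ v) :
    ContDiff ℝ ∞ fun z => phiT ϕ (τ z) (u z) (v z) :=
  contDiff_deriv_apply (by fun_prop) hτ

@[fun_prop]
theorem contDiff_etaX (hη : ContDiff ℝ ∞ fun p : ℝ × ℝ => η p.1 p.2)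
    (hτ : ContDiff ℝ ∞ τ) (hu : ContDiff ℝ ∞ u) : ContDiff ℝ ∞ fun z => etaX η (τ z) (u z) :=
  contDiff_partialSnd hη hτ hu

@[fun_prop]
theorem contDiff_etaT (hη : ContDiff ℝ ∞ fun p : ℝ × ℝ => η p.1 p.2)
    (hτ : ContDiff ℝ ∞ τ) (hu : ContDiff ℝ ∞ u) : ContDiff ℝ ∞ fun z => etaT η (τ z) (u z) :=
  contDiff_partialFst hη hτ hu

@[fun_prop]
theorem contDiff_psi (hη : ContDiff ℝ ∞ fun p : ℝ × ℝ => η p.1 p.2)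
    (hϕ : ContDiff ℝ ∞ fun p : ℝ × ℝ × ℝ => ϕ p.1 p.2.1 p.2.2)
    (hτ : ContDiff ℝ ∞ τ) (hu : ContDiff ℝ ∞ u) : ContDiff ℝ ∞ fun z => psi η ϕ (τ z) (u z) := by
  unfold psi
  fun_prop

@[fun_prop]
theorem contDiff_psiX (hη : ContDiff ℝ ∞ fun p : ℝ × ℝ => η p.1 p.2)
    (hϕ : ContDiff ℝ ∞ fun p : ℝ × ℝ × ℝ => ϕ p.1 p.2.1 p.2.2)
    (hτ : ContDiff ℝ ∞ τ) (hu : ContDiff ℝ ∞ u) : ContDiff ℝ ∞ fun z => psiX η ϕ (τ z) (u z) :=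
  contDiff_partialSnd (f := psi η ϕ) (by fun_prop) hτ hu

@[fun_prop]
theorem contDiff_psiT (hη : ContDiff ℝ ∞ fun p : ℝ × ℝ => η p.1 p.2)
    (hϕ : ContDiff ℝ ∞ fun p : ℝ × ℝ × ℝ => ϕ p.1 p.2.1 p.2.2)
    (hτ : ContDiff ℝ ∞ τ) (hu : ContDiff ℝ ∞ u) : ContDiff ℝ ∞ fun z => psiT η ϕ (τ z) (u z) :=
  contDiff_partialFst (f := psi η ϕ) (by fun_prop) hτ hu

@[fun_prop]
theorem contDiff_Theta (hη : ContDiff ℝ ∞ fun p : ℝ × ℝ => η p.1 p.2)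
    (hϕ : ContDiff ℝ ∞ fun p : ℝ × ℝ × ℝ => ϕ p.1 p.2.1 p.2.2) {g : ℝ}
    (hτ : ContDiff ℝ ∞ τ) (hu : ContDiff ℝ ∞ u) :
    ContDiff ℝ ∞ fun z => Theta g η ϕ (τ z) (u z) := by
  unfold Theta
  fun_prop

end Smoothness

/-- The functional `∫₀ᴸ η (x ∂ₓψ + ψ / 4) dx` whose time derivative drives the multiplier
argument; the coefficient `1 / 4` makes the full energy appear in that derivative. -/
def virial (L : ℝ) (η : ℝ → ℝ → ℝ) (ϕ : ℝ → ℝ → ℝ → ℝ) (t : ℝ) : ℝ :=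
  ∫ x in 0..L, η t x * (x * psiX η ϕ t x + 1 / 4 * psi η ϕ t x)

section TimeDerivatives

variable {η : ℝ → ℝ → ℝ} {ϕ : ℝ → ℝ → ℝ → ℝ}

theorem psiX_eq (hη : ContDiff ℝ ∞ fun p : ℝ × ℝ => η p.1 p.2)
    (hϕ : ContDiff ℝ ∞ fun p : ℝ × ℝ × ℝ => ϕ p.1 p.2.1 p.2.2) (t x : ℝ) :
    psiX η ϕ t x = phiX ϕ t x (η t x) + etaX η t x * phiY ϕ t x (η t x) :=
  (hasDerivAt_comp_graph (f := ϕ t) (by fun_prop) (hasDerivAt_partialSnd hη t x)).deriv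

theorem psiT_eq (hη : ContDiff ℝ ∞ fun p : ℝ × ℝ => η p.1 p.2)
    (hϕ : ContDiff ℝ ∞ fun p : ℝ × ℝ × ℝ => ϕ p.1 p.2.1 p.2.2) (t x : ℝ) :
    psiT η ϕ t x = phiT ϕ t x (η t x) + etaT η t x * phiY ϕ t x (η t x) :=
  (hasDerivAt_comp_graph (f := fun s y => ϕ s x y) (by fun_prop)
    (hasDerivAt_partialFst hη t x)).deriv

theorem hasDerivAt_phiX_time (hϕ : ContDiff ℝ ∞ fun p : ℝ × ℝ × ℝ => ϕ p.1 p.2.1 p.2.2)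
    (t x y : ℝ) :
    HasDerivAt (fun s => phiX ϕ s x y) (phiX (phiT ϕ) t x y) t := by
  have hslice : ContDiff ℝ ∞ fun p : ℝ × ℝ => ϕ p.1 p.2 y := by fun_prop
  exact (hasDerivAt_partialFst (f := partialSnd fun s x => ϕ s x y) (by fun_prop) t x).congr_deriv
    (partialFst_partialSnd_comm hslice t x)

theorem hasDerivAt_phiY_time (hϕ : ContDiff ℝ ∞ fun p : ℝ × ℝ × ℝ => ϕ p.1 p.2.1 p.2.2)
    (t x y : ℝ) :
    HasDerivAt (fun s => phiY ϕ s x y) (phiY (phiT ϕ) t x y) t := by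
  have hslice : ContDiff ℝ ∞ fun p : ℝ × ℝ => ϕ p.1 x p.2 := by fun_prop
  exact (hasDerivAt_partialFst (f := partialSnd fun s y => ϕ s x y) (by fun_prop) t y).congr_deriv
    (partialFst_partialSnd_comm hslice t y)

theorem hasDerivAt_dirichletEnergy (hη : ContDiff ℝ ∞ fun p : ℝ × ℝ => η p.1 p.2)
    (hϕ : ContDiff ℝ ∞ fun p : ℝ × ℝ × ℝ => ϕ p.1 p.2.1 p.2.2) (L h t : ℝ) :
    HasDerivAt (fun s => dirichletEnergy L h (η s) (ϕ s))
      (2 * (∫ x in 0..L, ∫ y in (-h)..η t x, (phiX (phiT ϕ) t x y * phiX ϕ t x y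
          + phiY (phiT ϕ) t x y * phiY ϕ t x y))
        + ∫ x in 0..L, etaT η t x * (phiX ϕ t x (η t x) ^ 2 + phiY ϕ t x (η t x) ^ 2)) t := by
  have column (s x : ℝ) := hasDerivAt_integral_under_graph
    (f := fun s y => phiX ϕ s x y ^ 2 + phiY ϕ s x y ^ 2) (by fun_prop) (by fun_prop)
    (fun s y => ((hasDerivAt_phiX_time hϕ s x y).fun_pow 2).fun_add
      ((hasDerivAt_phiY_time hϕ s x y).fun_pow 2)) (hasDerivAt_partialFst hη s x) (-h)
  refine (hasDerivAt_integral_of_continuous (by fun_prop) (by fun_prop) column 0 L t).congr_deriv ?_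
  rw [← intervalIntegral.integral_const_mul,
    ← intervalIntegral.integral_add (Continuous.intervalIntegrable (by fun_prop) _ _)
      (Continuous.intervalIntegrable (by fun_prop) _ _)]
  refine intervalIntegral.integral_congr fun x _ => ?_
  simp only [← intervalIntegral.integral_const_mul]
  congr 1
  exact intervalIntegral.integral_congr fun y _ => by ring

theorem hasDerivAt_virial_of_contDiff (hη : ContDiff ℝ ∞ fun p : ℝ × ℝ => η p.1 p.2)
    (hϕ : ContDiff ℝ ∞ fun p : ℝ × ℝ × ℝ => ϕ p.1 p.2.1 p.2.2) (L t : ℝ) :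
    HasDerivAt (virial L η ϕ)
      (∫ x in 0..L, (etaT η t x * (x * psiX η ϕ t x + 1 / 4 * psi η ϕ t x)
        + η t x * (x * partialSnd (psiT η ϕ) t x + 1 / 4 * psiT η ϕ t x))) t := by
  have hψ : ContDiff ℝ ∞ fun p : ℝ × ℝ => psi η ϕ p.1 p.2 := by fun_prop
  have hψX (s x : ℝ) : HasDerivAt (fun s => psiX η ϕ s x) (partialSnd (psiT η ϕ) s x) s :=
    (hasDerivAt_partialFst (f := psiX η ϕ) (by fun_prop) s x).congr_deriv
      (partialFst_partialSnd_comm hψ s x)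
  exact hasDerivAt_integral_of_continuous (by fun_prop) (by fun_prop)
    (fun s x => (hasDerivAt_partialFst hη s x).fun_mul (((hψX s x).const_mul x).fun_add
      ((hasDerivAt_partialFst hψ s x).const_mul (1 / 4)))) 0 L t

theorem mul_Theta_eq_integral (hη : ContDiff ℝ ∞ fun p : ℝ × ℝ => η p.1 p.2)
    (hϕ : ContDiff ℝ ∞ fun p : ℝ × ℝ × ℝ => ϕ p.1 p.2.1 p.2.2) (L g t : ℝ) :
    L * Theta g η ϕ t L = ∫ x in 0..L, (Theta g η ϕ t x - x * (etaX η t x * psiT η ϕ t x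
      + η t x * partialSnd (psiT η ϕ) t x + g * η t x * etaX η t x)) := by
  have hΘ (x : ℝ) : HasDerivAt (fun x => x * Theta g η ϕ t x) (Theta g η ϕ t x
      - x * (etaX η t x * psiT η ϕ t x + η t x * partialSnd (psiT η ϕ) t x
        + g * η t x * etaX η t x)) x := by
    have hηx : HasDerivAt (η t) (etaX η t x) x := hasDerivAt_partialSnd hη t x
    exact ((hasDerivAt_id x).fun_mul ((hηx.fun_neg.fun_mul
      (hasDerivAt_partialSnd (f := psiT η ϕ) (by fun_prop) t x)).fun_sub
        ((hηx.fun_pow 2).const_mul (g / 2)))).congr_deriv (by simp only [Theta, id]; ring)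
  rw [intervalIntegral.integral_eq_sub_of_hasDerivAt (fun x _ => hΘ x)
    (Continuous.intervalIntegrable (by fun_prop) _ _), zero_mul, sub_zero]

end TimeDerivatives

theorem energy2D_eq (L h g : ℝ) (η : ℝ → ℝ → ℝ) (ϕ : ℝ → ℝ → ℝ → ℝ) (t : ℝ) :
    energy2D L h g η ϕ t =
      g / 2 * (∫ x in 0..L, η t x ^ 2) + 1 / 2 * dirichletEnergy L h (η t) (ϕ t) :=
  rfl

theorem dirichletEnergy_le_two_mul_energy2D {L g : ℝ} (hL : 0 ≤ L) (hg : 0 ≤ g) (h : ℝ)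
    (η : ℝ → ℝ → ℝ) (ϕ : ℝ → ℝ → ℝ → ℝ) (t : ℝ) :
    dirichletEnergy L h (η t) (ϕ t) ≤ 2 * energy2D L h g η ϕ t := by
  have potential : 0 ≤ ∫ x in 0..L, η t x ^ 2 :=
    intervalIntegral.integral_nonneg hL fun _ _ => sq_nonneg _
  linarith [energy2D_eq L h g η ϕ t, mul_nonneg hg potential]

namespace IsWW2D

variable {L h g T t : ℝ} {η : ℝ → ℝ → ℝ} {ϕ : ℝ → ℝ → ℝ → ℝ}

theorem isFluidPotential (H : IsWW2D L h g T η ϕ) (hh : 0 ≤ h) (ht : t ∈ Icc 0 T) :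
    IsFluidPotential L h (η t) (ϕ t) where
  contDiff_surface := by have := H.smooth_eta; fun_prop
  contDiff_potential := by have := H.smooth_phi; fun_prop
  bottom_le x hx := by linarith [H.eta_lower t ht x hx]
  laplace := H.laplace t ht
  left_wall := H.bc_left t ht
  right_wall := H.bc_right t ht
  bottom := H.bc_bottom t ht

theorem mul_integral_sq_le_two_mul_energy2D (H : IsWW2D L h g T η ϕ) (hL : 0 ≤ L) (hh : 0 ≤ h)
    (ht : t ∈ Icc 0 T) : g * (∫ x in 0..L, η t x ^ 2) ≤ 2 * energy2D L h g η ϕ t := by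
  have := (H.isFluidPotential hh ht).dirichletEnergy_nonneg hL
  linarith [energy2D_eq L h g η ϕ t]

theorem energy2D_nonneg (H : IsWW2D L h g T η ϕ) (hL : 0 ≤ L) (hh : 0 ≤ h) (hg : 0 ≤ g)
    (ht : t ∈ Icc 0 T) : 0 ≤ energy2D L h g η ϕ t := by
  linarith [(H.isFluidPotential hh ht).dirichletEnergy_nonneg hL,
    dirichletEnergy_le_two_mul_energy2D hL hg h η ϕ t]

theorem integral_psi_mul_etaT (H : IsWW2D L h g T η ϕ) (hL : 0 ≤ L) (hh : 0 ≤ h)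
    (ht : t ∈ Icc 0 T) :
    ∫ x in 0..L, psi η ϕ t x * etaT η t x = dirichletEnergy L h (η t) (ϕ t) :=
  (intervalIntegral_congr_Icc hL fun x hx => congrArg _ (H.kinematic t ht x hx)).trans
    ((H.isFluidPotential hh ht).dirichletEnergy_eq hL).symm

theorem hasDerivAt_energy2D (H : IsWW2D L h g T η ϕ) (hL : 0 ≤ L) (hh : 0 ≤ h)
    (ht : t ∈ Icc 0 T) : HasDerivAt (energy2D L h g η ϕ) 0 t := by
  have hη := H.smooth_eta
  have hϕ := H.smooth_phi
  have green : ∫ x in 0..L, ∫ y in (-h)..η t x,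
      (phiX (phiT ϕ) t x y * phiX ϕ t x y + phiY (phiT ϕ) t x y * phiY ϕ t x y) =
      ∫ x in 0..L, phiT ϕ t x (η t x) * etaT η t x :=
    ((H.isFluidPotential hh ht).green_first_identity hL (v := phiT ϕ t) (by fun_prop)).trans
      (intervalIntegral_congr_Icc hL fun x hx => congrArg _ (H.kinematic t ht x hx).symm)
  have potential : HasDerivAt (fun s => ∫ x in 0..L, η s x ^ 2)
      (∫ x in 0..L, 2 * η t x * etaT η t x) t :=
    (hasDerivAt_integral_of_continuous (by fun_prop) (by fun_prop)
      (fun s x => (hasDerivAt_partialFst hη s x).fun_pow 2) 0 L t).congr_deriv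
      (intervalIntegral.integral_congr fun x _ => by norm_num [etaT, partialFst])
  refine ((potential.const_mul (g / 2)).fun_add
    ((hasDerivAt_dirichletEnergy hη hϕ L h t).const_mul (1 / 2))).congr_deriv ?_
  rw [green, ← intervalIntegral.integral_const_mul, ← intervalIntegral.integral_const_mul,
    ← intervalIntegral.integral_add, ← intervalIntegral.integral_const_mul,
    ← intervalIntegral.integral_add]
  · refine (intervalIntegral_congr_Icc hL (g := fun _ => 0) fun x hx => ?_).trans
      intervalIntegral.integral_zero
    linear_combination etaT η t x * H.bernoulli t ht x hx
  all_goals exact Continuous.intervalIntegrable (by fun_prop) _ _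

theorem energy2D_eq_initial (H : IsWW2D L h g T η ϕ) (hL : 0 ≤ L) (hh : 0 ≤ h)
    (ht : t ∈ Icc 0 T) : energy2D L h g η ϕ t = energy2D L h g η ϕ 0 :=
  constant_of_has_deriv_right_zero
    (fun _ hs => (H.hasDerivAt_energy2D hL hh hs).continuousAt.continuousWithinAt)
    (fun _ hs => (H.hasDerivAt_energy2D hL hh (Ico_subset_Icc_self hs)).hasDerivWithinAt) t ht

theorem tractionX_eq (H : IsWW2D L h g T η ϕ) (ht : t ∈ Icc 0 T) {x : ℝ} (hx : x ∈ Icc 0 L) :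
    tractionX (η t) (ϕ t) x =
      etaT η t x * psiX η ϕ t x - etaX η t x * (psiT η ϕ t x + g * η t x) := by
  rw [psiX_eq H.smooth_eta H.smooth_phi, psiT_eq H.smooth_eta H.smooth_phi, H.kinematic t ht x hx]
  change phiX ϕ t x (η t x) * phiY ϕ t x (η t x) - etaX η t x *
    (1 / 2 * (phiX ϕ t x (η t x) ^ 2 - phiY ϕ t x (η t x) ^ 2)) = _
  linear_combination etaX η t x * H.bernoulli t ht x hx

theorem tractionY_eq (H : IsWW2D L h g T η ϕ) (ht : t ∈ Icc 0 T) {x : ℝ} (hx : x ∈ Icc 0 L) :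
    tractionY (η t) (ϕ t) x = psiT η ϕ t x + g * η t x := by
  rw [psiT_eq H.smooth_eta H.smooth_phi, H.kinematic t ht x hx]
  change -(1 / 2 * (phiX ϕ t x (η t x) ^ 2 - phiY ϕ t x (η t x) ^ 2)) -
    etaX η t x * (phiX ϕ t x (η t x) * phiY ϕ t x (η t x)) = _
  linear_combination -H.bernoulli t ht x hx

theorem hasDerivAt_virial (H : IsWW2D L h g T η ϕ) (hL : 0 ≤ L) (hh : 0 ≤ h)
    (ht : t ∈ Icc 0 T) :
    HasDerivAt (virial L η ϕ)
      ((∫ x in 0..L, (x * tractionX (η t) (ϕ t) x + η t x * tractionY (η t) (ϕ t) x))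
        - 7 / 4 * (∫ x in 0..L, η t x * tractionY (η t) (ϕ t) x)
        + 1 / 2 * energy2D L h g η ϕ t - L * Theta g η ϕ t L) t := by
  have hη := H.smooth_eta
  have hϕ := H.smooth_phi
  refine (hasDerivAt_virial_of_contDiff hη hϕ L t).congr_deriv ?_
  have dilation : ∫ x in 0..L, (x * tractionX (η t) (ϕ t) x + η t x * tractionY (η t) (ϕ t) x) =
      ∫ x in 0..L, (x * (etaT η t x * psiX η ϕ t x - etaX η t x * (psiT η ϕ t x + g * η t x))
        + η t x * (psiT η ϕ t x + g * η t x)) :=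
    intervalIntegral_congr_Icc hL fun x hx => by rw [H.tractionX_eq ht hx, H.tractionY_eq ht hx]
  have vertical : ∫ x in 0..L, η t x * tractionY (η t) (ϕ t) x =
      ∫ x in 0..L, η t x * (psiT η ϕ t x + g * η t x) :=
    intervalIntegral_congr_Icc hL fun x hx => by rw [H.tractionY_eq ht hx]
  rw [dilation, vertical, energy2D_eq, ← H.integral_psi_mul_etaT hL hh ht,
    mul_Theta_eq_integral hη hϕ]
  simp only [mul_add (1 / 2 : ℝ), ← mul_assoc, ← intervalIntegral.integral_const_mul]
  rw [← intervalIntegral.integral_add, ← intervalIntegral.integral_sub,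
    ← intervalIntegral.integral_add, ← intervalIntegral.integral_sub]
  · exact intervalIntegral.integral_congr fun x _ => by simp only [Theta]; ring
  all_goals exact Continuous.intervalIntegrable (by fun_prop) _ _

theorem le_deriv_virial (H : IsWW2D L h g T η ϕ) (hL : 0 ≤ L) (hh : 0 ≤ h) (hg : 0 ≤ g)
    (ht : t ∈ Icc 0 T) {B : ℝ} (hslope : ∀ x ∈ Icc 0 L, |etaX η t x| ≤ B) :
    (2 - 7 * B) / 4 * energy2D L h g η ϕ t
        + L / 2 * (∫ y in (-h)..η t L, phiY ϕ t L y ^ 2)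
        + h / 16 * (∫ x in 0..L, phiX ϕ t x (-h) ^ 2) - L * Theta g η ϕ t L ≤
      deriv (virial L η ϕ) t := by
  have fluid := H.isFluidPotential hh ht
  have dilation : _ = h / 2 * (∫ x in 0..L, phiX ϕ t x (-h) ^ 2)
    + L / 2 * ∫ y in (-h)..η t L, phiY ϕ t L y ^ 2 := fluid.integral_dilation_traction hL
  have vertical : _ ≤ B / 2 * dirichletEnergy L h (η t) (ϕ t)
      + h / 4 * ∫ x in 0..L, phiX ϕ t x (-h) ^ 2 :=
    fluid.integral_surface_mul_tractionY_le hL hslope (H.eta_lower t ht)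
  have hB : 0 ≤ B := (abs_nonneg _).trans (hslope 0 ⟨le_rfl, hL⟩)
  have kinetic : B * dirichletEnergy L h (η t) (ϕ t) ≤ B * (2 * energy2D L h g η ϕ t) := by
    gcongr
    exact dirichletEnergy_le_two_mul_energy2D hL hg h η ϕ t
  rw [(H.hasDerivAt_virial hL hh ht).deriv, dilation]
  linarith

theorem le_virial_sub_virial (H : IsWW2D L h g T η ϕ) (hL : 0 ≤ L) (hh : 0 ≤ h) (hg : 0 ≤ g)
    (hT : 0 ≤ T) {B : ℝ} (hslope : ∀ t ∈ Icc 0 T, ∀ x ∈ Icc 0 L, |etaX η t x| ≤ B) :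
    T * ((2 - 7 * B) / 4) * energy2D L h g η ϕ 0
        + L / 2 * (∫ t in 0..T, ∫ y in (-h)..η t L, phiY ϕ t L y ^ 2)
        + h / 16 * (∫ t in 0..T, ∫ x in 0..L, phiX ϕ t x (-h) ^ 2)
        - L * (∫ t in 0..T, Theta g η ϕ t L) ≤
      virial L η ϕ T - virial L η ϕ 0 := by
  have hη := H.smooth_eta
  have hϕ := H.smooth_phi
  have hvirial (t : ℝ) := (hasDerivAt_virial_of_contDiff hη hϕ L t).differentiableAt.hasDerivAt
  have integrated := intervalIntegral.integral_le_sub_of_hasDeriv_right_of_le hT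
    (fun t _ => (hvirial t).continuousAt.continuousWithinAt)
    (fun t _ => (hvirial t).hasDerivWithinAt)
    (Continuous.integrableOn_Icc (by fun_prop)) fun t ht =>
      H.energy2D_eq_initial hL hh (Ioo_subset_Icc_self ht) ▸
        H.le_deriv_virial hL hh hg (Ioo_subset_Icc_self ht) (hslope t (Ioo_subset_Icc_self ht))
  refine le_of_eq_of_le ?_ integrated
  rw [intervalIntegral.integral_sub, intervalIntegral.integral_add, intervalIntegral.integral_add]
  · simp only [intervalIntegral.integral_const_mul, intervalIntegral.integral_const, smul_eq_mul]
    ring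
  all_goals exact Continuous.intervalIntegrable (by fun_prop) _ _

theorem abs_virial_le (H : IsWW2D L h g T η ϕ) (hL : 0 ≤ L) (hh : 0 ≤ h) (hg : 0 < g)
    (ht : t ∈ Icc 0 T) {A : ℝ}
    (hψ : √(∫ x in 0..L, psiX η ϕ t x ^ 2) ≤ A * √(2 * energy2D L h g η ϕ t)) :
    |virial L η ϕ t| ≤ 5 / 2 * (L * A / √g) * energy2D L h g η ϕ t := by
  have hη := H.smooth_eta
  have hϕ := H.smooth_phi
  have surface : √(∫ x in 0..L, η t x ^ 2) ≤ √(2 * energy2D L h g η ϕ t) / √g := by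
    rw [← Real.sqrt_div' _ hg.le]
    exact Real.sqrt_le_sqrt ((le_div_iff₀' hg).2 (H.mul_integral_sq_le_two_mul_energy2D hL hh ht))
  calc |virial L η ϕ t|
      ≤ (1 + |1 / 4|) * L * (√(∫ x in 0..L, η t x ^ 2) * √(∫ x in 0..L, psiX η ϕ t x ^ 2)) :=
        abs_integral_mul_id_mul_deriv_add_le (by fun_prop)
          (hasDerivAt_partialSnd (f := psi η ϕ) (by fun_prop) t)
          (by fun_prop : Continuous (psiX η ϕ t)) hL (H.eta_mean t ht) _
    _ ≤ (1 + |1 / 4|) * L * (√(2 * energy2D L h g η ϕ t) / √g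
          * (A * √(2 * energy2D L h g η ϕ t))) := by gcongr
    _ = 5 / 4 * (L * A / √g) * (√(2 * energy2D L h g η ϕ t) * √(2 * energy2D L h g η ϕ t)) := by
        rw [abs_of_pos (by norm_num)]; ring
    _ = 5 / 2 * (L * A / √g) * energy2D L h g η ϕ t := by
        rw [Real.mul_self_sqrt (mul_nonneg zero_le_two (H.energy2D_nonneg hL hh hg.le ht))]; ring

end IsWW2D

/-- Corollary 1.4, observability under smallness of the slope and a
control of `‖∂ₓψ‖_{L²}` by `A√(2𝓗)`. -/
theorem observability_2d
    (L₁ h g T : ℝ) (hL : 0 < L₁) (hh : 0 < h) (hg : 0 < g) (hT0 : 0 < T)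
    (η : ℝ → ℝ → ℝ) (ϕ : ℝ → ℝ → ℝ → ℝ) (hsol : IsWW2D L₁ h g T η ϕ)
    (A B : ℝ) (hA : 0 < A) (hB : 0 < B) (hB7 : B < 2 / 7)
    (hT : T ≥ 4 / (2 - 7 * B) * (1 + 5 * L₁ * A / Real.sqrt g))
    (hslope : ∀ t ∈ Icc (0:ℝ) T, ∀ x ∈ Icc (0:ℝ) L₁, |etaX η t x| ≤ B)
    (hpsiL2 : ∀ t ∈ Icc (0:ℝ) T,
      Real.sqrt (∫ x in (0:ℝ)..L₁, (psiX η ϕ t x) ^ 2)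
        ≤ A * Real.sqrt (2 * energy2D L₁ h g η ϕ 0)) :
    L₁ * ∫ t in (0:ℝ)..T, Theta g η ϕ t L₁
      ≥ energy2D L₁ h g η ϕ 0
        + L₁ / 2 * (∫ t in (0:ℝ)..T, ∫ y in (-h)..(η t L₁), (phiY ϕ t L₁ y) ^ 2)
        + h / 16 * ∫ t in (0:ℝ)..T, ∫ x in (0:ℝ)..L₁, (phiX ϕ t x (-h)) ^ 2 := by
  have energy_nonneg := hsol.energy2D_nonneg hL.le hh.le hg.le ⟨le_rfl, hT0.le⟩
  have growth := hsol.le_virial_sub_virial hL.le hh.le hg.le hT0.le hslope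
  have virial_le (t : ℝ) (ht : t ∈ Icc 0 T) :
      |virial L₁ η ϕ t| ≤ 5 / 2 * (L₁ * A / √g) * energy2D L₁ h g η ϕ 0 := by
    have energy_eq := hsol.energy2D_eq_initial hL.le hh.le ht
    exact energy_eq ▸ hsol.abs_virial_le hL.le hh.le hg ht (energy_eq.symm ▸ hpsiL2 t ht)
  have time_le : 1 + 5 * (L₁ * A / √g) ≤ T * ((2 - 7 * B) / 4) := by
    rw [ge_iff_le, div_mul_eq_mul_div, div_le_iff₀ (by linarith), mul_assoc 5,
      mul_div_assoc 5] at hT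
    linarith
  have absorbed := mul_le_mul_of_nonneg_right time_le energy_nonneg
  have start_le := neg_le_of_abs_le (virial_le 0 ⟨le_rfl, hT0.le⟩)
  have end_le := le_of_abs_le (virial_le T ⟨hT0.le, le_rfl⟩)
  linarith
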